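/- Let e ≤ r be a positive integer, set I' = (f_1,…,f_e) and J' = J ∩ I'. If depth_S (I'/J') = d, then depth_S (I/J) = d. -/

import Mathlib

open MvPolynomial

/-- The square-free monomial `∏ i ∈ T, X i` associated to a set `T` of variables. -/
noncomputable def sqMon (K : Type) [Field K] {n : ℕ} (T : Finset (Fin n)) :
    MvPolynomial (Fin n) K :=
  ∏ i ∈ T, X i

/-- `GenBySqMonOfDeg K P I` means: `I` is generated by square-free monomials whose
degrees satisfy the predicate `P`. -/
def GenBySqMonOfDeg (K : Type) [Field K] {n : ℕ} (P : ℕ → Prop)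
    (I : Ideal (MvPolynomial (Fin n) K)) : Prop :=
  ∃ G : Set (Finset (Fin n)), (∀ T ∈ G, P T.card) ∧ I = Ideal.span (sqMon K '' G)

/-- `rho K d I` : the number of square-free monomials of degree `d` belonging to `I`. -/
noncomputable def rho (K : Type) [Field K] {n : ℕ} (d : ℕ)
    (I : Ideal (MvPolynomial (Fin n) K)) : ℕ :=
  Set.ncard {T : Finset (Fin n) | T.card = d ∧ sqMon K T ∈ I}

/-- The maximal graded ideal `(x_1, …, x_n)` of `K[x_1, …, x_n]`. -/
noncomputable def maxGraded (K : Type) [Field K] (n : ℕ) :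
    Ideal (MvPolynomial (Fin n) K) :=
  Ideal.span (Set.range (X : Fin n → MvPolynomial (Fin n) K))

/-- The depth of the module `M` with respect to the ideal `I` : the supremum of the
lengths of `M`-regular sequences consisting of elements of `I`. -/
noncomputable def moduleDepth {R : Type} [CommRing R] (I : Ideal R)
    (M : Type) [AddCommGroup M] [Module R M] : ℕ∞ :=
  sSup {k : ℕ∞ | ∃ rs : List R, k = (rs.length : ℕ∞) ∧ (∀ r ∈ rs, r ∈ I) ∧
    RingTheory.Sequence.IsRegular M rs}

/-- The `R`-module `I/J` (more precisely `I/(I ∩ J)`, which is `I/J` when `J ≤ I`). -/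
noncomputable abbrev idealQuot {R : Type} [CommRing R] (I J : Ideal R) : Type :=
  ↥I ⧸ (Submodule.comap I.subtype (J : Submodule R R))

/-!
Adjoin to `J` a square-free monomial `x_T ∈ I \ J` with `T` maximal: since then
`J : x_T = (x_i : i ∉ T)`, the new factor is `K[x_i : i ∈ T]`, of depth `|T|`. Hence `I/J` is
filtered by such factors, and `Ext^i(K, I/J) = 0` for `i < d` as soon as the square-free monomial
ideal `I` is generated in degrees at least `d`.

This applies to the last term of `0 → I'/(J ∩ I') → I/J → I/(J + I') → 0`, so that `Ext^d(K, -)`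
of the first term embeds into that of the middle one. By Rees' theorem the depth is the least
degree in which `Ext(K, -)` does not vanish.
-/

section ExtVanishing

open CategoryTheory Abelian Limits

universe w v u

/-- `Ext^i(N, M) = 0` for all `i < k`. For `N = R/𝔪` this is `k ≤ grade(𝔪, M)`, where the
zero module has infinite grade, so that the estimates along short exact sequences hold without
exception. -/
def ExtVanishesBelow {C : Type u} [Category.{v} C] [Abelian C] [HasExt.{w} C]
    (N : C) (k : ℕ) (M : C) : Prop :=
  ∀ i < k, Subsingleton (Ext N M i)

namespace ExtVanishesBelow

section Abelian

variable {C : Type u} [Category.{v} C] [Abelian C] [HasExt.{w} C] {N M M' : C} {k l : ℕ}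

lemma of_le (h : ExtVanishesBelow N k M) (hlk : l ≤ k) : ExtVanishesBelow N l M :=
  fun i hi ↦ h i (hi.trans_le hlk)

lemma of_iso (h : ExtVanishesBelow N k M) (e : M ≅ M') : ExtVanishesBelow N k M' := fun i hi ↦
  have : Subsingleton ((extFunctorObj N i).obj M) := h i hi
  ((extFunctorObj N i).mapIso e).addCommGroupIsoToAddEquiv.symm.subsingleton

lemma of_isZero (hM : IsZero M) : ExtVanishesBelow N k M := fun i _ ↦
  AddCommGrpCat.subsingleton_of_isZero ((extFunctorObj N i).map_isZero hM)

variable {S : ShortComplex C}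

lemma X₂_of_shortExact (hS : S.ShortExact) (h₁ : ExtVanishesBelow N k S.X₁)
    (h₃ : ExtVanishesBelow N k S.X₃) : ExtVanishesBelow N k S.X₂ := fun i hi ↦
  AddCommGrpCat.subsingleton_of_isZero <|
    (Ext.covariant_sequence_exact₂' N hS i).isZero_of_both_zeros
      ((AddCommGrpCat.isZero_of_iff_subsingleton.mpr (h₁ i hi)).eq_zero_of_src _)
      ((AddCommGrpCat.isZero_of_iff_subsingleton.mpr (h₃ i hi)).eq_zero_of_tgt _)

lemma mono_postcomp_of_shortExact (hS : S.ShortExact) (h₃ : ExtVanishesBelow N k S.X₃)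
    {i : ℕ} (hi : i ≤ k) :
    Mono (AddCommGrpCat.ofHom ((Ext.mk₀ S.f).postcomp N (add_zero i))) := by
  cases i with
  | zero =>
    have := hS.mono_f
    exact Ext.mono_postcomp_mk₀_of_mono N S.f
  | succ i =>
    exact (Ext.covariant_sequence_exact₁' N hS i (i + 1) rfl).mono_g
      ((AddCommGrpCat.isZero_of_iff_subsingleton.mpr (h₃ i hi)).eq_zero_of_src _)

lemma X₁_of_shortExact (hS : S.ShortExact) (h₂ : ExtVanishesBelow N (k + 1) S.X₂)
    (h₃ : ExtVanishesBelow N k S.X₃) : ExtVanishesBelow N (k + 1) S.X₁ := by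
  intro i hi
  have := h₂ i hi
  exact ((AddCommGrpCat.mono_iff_injective _).mp
    (mono_postcomp_of_shortExact hS h₃ (Nat.le_of_lt_succ hi))).subsingleton

end Abelian

/- Multiplication by `x` on `Ext^i(N, M)` is zero because `x` kills `N`, and injective for `i ≤ k`
by the long exact sequence of `0 → M → M → M/xM → 0`. -/
lemma of_quotSMulTop {R : Type u} [CommRing R] [Small.{v} R] {N M : ModuleCat.{v} R} {k : ℕ}
    {x : R} (hxN : x ∈ Module.annihilator R N) (hxM : IsSMulRegular M x)
    (h : ExtVanishesBelow N k (ModuleCat.of R (QuotSMulTop x M))) :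
    ExtVanishesBelow N (k + 1) M := by
  intro i hi
  have : Mono (AddCommGrpCat.ofHom ((Ext.mk₀ (x • 𝟙 M)).postcomp N (add_zero i))) :=
    mono_postcomp_of_shortExact (S := M.smulShortComplex x) hxM.smulShortComplex_shortExact h
      (Nat.le_of_lt_succ hi)
  exact AddCommGrpCat.subsingleton_of_isZero <|
    IsZero.of_mono_eq_zero _ (Ext.postcomp_smul_id_eq_zero_of_mem_annihilator hxN i)

end ExtVanishesBelow

end ExtVanishing

section Depth

open CategoryTheory

variable {R : Type} [CommRing R] [IsNoetherianRing R] {𝔪 : Ideal R}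

lemma natCast_le_moduleDepth_iff {M : Type} [AddCommGroup M] [Module R M] [Module.Finite R M]
    (hM : 𝔪 • (⊤ : Submodule R M) < ⊤) {k : ℕ} :
    (k : ℕ∞) ≤ moduleDepth 𝔪 M ↔
      ExtVanishesBelow (ModuleCat.of R (R ⧸ 𝔪)) k (ModuleCat.of R M) := by
  have support_eq : Module.support R (R ⧸ 𝔪) = PrimeSpectrum.zeroLocus 𝔪 := by
    rw [Module.support_eq_zeroLocus, Ideal.annihilator_quotient]
  constructor
  · intro hk i hi
    obtain ⟨_, ⟨rs, rfl, hrs𝔪, hrs⟩, hirs⟩ :=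
      lt_sSup_iff.mp ((Nat.cast_lt (α := ℕ∞).mpr hi).trans_le hk)
    exact ModuleCat.subsingleton_ext_of_exists_isRegular 𝔪 (ModuleCat.of R (R ⧸ 𝔪))
      support_eq.subset (ModuleCat.of R M) hM rs hrs𝔪 hrs i (Nat.cast_lt.mp hirs)
  · intro h
    obtain ⟨rs, rfl, hrs𝔪, hrs⟩ := ModuleCat.exists_isRegular_of_exists_subsingleton_ext 𝔪 k
      (ModuleCat.of R M) hM (ModuleCat.of R (R ⧸ 𝔪)) support_eq h
    exact le_sSup ⟨rs, rfl, hrs𝔪, hrs⟩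

lemma moduleDepth_X₂_eq_of_shortExact {S : ShortComplex (ModuleCat.{0} R)} (hS : S.ShortExact)
    [Module.Finite R S.X₁] [Module.Finite R S.X₂]
    (h𝔪₁ : 𝔪 • (⊤ : Submodule R S.X₁) < ⊤) (h𝔪₂ : 𝔪 • (⊤ : Submodule R S.X₂) < ⊤) {k : ℕ}
    (h₁ : moduleDepth 𝔪 S.X₁ = k) (h₃ : ExtVanishesBelow (ModuleCat.of R (R ⧸ 𝔪)) k S.X₃) :
    moduleDepth 𝔪 S.X₂ = k := by
  refine le_antisymm ?_ ?_
  · refine (ENat.lt_add_one_iff (ENat.natCast_ne_top k)).mp (lt_of_not_ge fun hk ↦ ?_)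
    have hX₂ := (natCast_le_moduleDepth_iff h𝔪₂ (k := k + 1)).mp (mod_cast hk)
    have hX₁ := (natCast_le_moduleDepth_iff h𝔪₁).mpr (hX₂.X₁_of_shortExact hS h₃)
    rw [h₁, Nat.cast_le] at hX₁
    exact k.lt_irrefl hX₁
  · have hX₁ := (natCast_le_moduleDepth_iff h𝔪₁).mp h₁.ge
    exact (natCast_le_moduleDepth_iff h𝔪₂).mpr (hX₁.X₂_of_shortExact hS h₃)

end Depth

section IdealQuot

open CategoryTheory

variable {R : Type} [CommRing R] {I I' J J' : Ideal R}

/-- The map `I'/J' → I/J` induced by inclusions of ideals. -/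
noncomputable def idealQuotMap (hI : I' ≤ I) (hJ : J' ≤ J) : idealQuot I' J' →ₗ[R] idealQuot I J :=
  Submodule.mapQ _ _ (Submodule.inclusion hI) fun _ h ↦ hJ h

lemma idealQuotMap_injective (hI : I' ≤ I) :
    Function.Injective (idealQuotMap hI (inf_le_left : J ⊓ I' ≤ J)) := by
  refine (injective_iff_map_eq_zero _).mpr fun x ↦ ?_
  obtain ⟨x, rfl⟩ := Submodule.mkQ_surjective _ x
  simp only [idealQuotMap, Submodule.mkQ_apply, Submodule.mapQ_apply, Submodule.Quotient.mk_eq_zero]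
  exact fun hx ↦ ⟨hx, x.2⟩

lemma idealQuotMap_surjective (hJ : J' ≤ J) :
    Function.Surjective (idealQuotMap (le_refl I) hJ) := by
  rintro ⟨x⟩
  exact ⟨Submodule.Quotient.mk x, rfl⟩

lemma idealQuotMap_exact (hI : I' ≤ I) :
    Function.Exact (idealQuotMap hI (inf_le_left : J ⊓ I' ≤ J))
      (idealQuotMap (le_refl I) (le_sup_left : J ≤ J ⊔ I')) := by
  intro x
  obtain ⟨x, rfl⟩ := Submodule.mkQ_surjective _ x
  simp only [idealQuotMap, Submodule.mkQ_apply, Submodule.mapQ_apply, Submodule.Quotient.mk_eq_zero]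
  constructor
  · intro hx
    obtain ⟨a, ha, b, hb, hab⟩ := Submodule.mem_sup.mp hx
    refine ⟨Submodule.Quotient.mk ⟨b, hb⟩, ((Submodule.Quotient.eq _).mpr ?_).symm⟩
    have hxb : (x : R) - b = a := sub_eq_of_eq_add hab.symm
    change (x : R) - b ∈ J
    rwa [hxb]
  · rintro ⟨y, hy⟩
    obtain ⟨y, rfl⟩ := Submodule.mkQ_surjective _ y
    have hxy : (x : R) - y ∈ J :=
      (Submodule.Quotient.eq (Submodule.comap I.subtype J)).mp hy.symm
    have hx : (x : R) - y + y ∈ J ⊔ I' := Submodule.add_mem_sup hxy y.2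
    rwa [sub_add_cancel] at hx

/-- The complex `I'/(J ∩ I') → I/J → I/(J + I')` of the second isomorphism theorem. -/
noncomputable abbrev idealQuotShortComplex (hI : I' ≤ I) (J : Ideal R) :
    ShortComplex (ModuleCat.{0} R) :=
  ModuleCat.shortComplexOfCompEqZero
    (idealQuotMap hI (inf_le_left : J ⊓ I' ≤ J)) (idealQuotMap le_rfl (le_sup_left : J ≤ J ⊔ I'))
    (idealQuotMap_exact hI).linearMap_comp_eq_zero

lemma idealQuotShortComplex_shortExact (hI : I' ≤ I) (J : Ideal R) :
    (idealQuotShortComplex hI J).ShortExact where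
  exact := ModuleCat.shortComplex_exact _ (idealQuotMap_exact hI)
  mono_f := (ModuleCat.mono_iff_injective _).mpr (idealQuotMap_injective hI)
  epi_g := (ModuleCat.epi_iff_surjective _).mpr (idealQuotMap_surjective le_sup_left)

/-- Multiplication by `a` as an isomorphism `R/(J : a) ≅ (a)/(J ∩ (a))`. -/
noncomputable def quotColonEquiv (J : Ideal R) (a : R) :
    (R ⧸ J.colon {a}) ≃ₗ[R] idealQuot (Ideal.span {a}) (J ⊓ Ideal.span {a}) :=
  let φ : R →ₗ[R] idealQuot (Ideal.span {a}) (J ⊓ Ideal.span {a}) :=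
    LinearMap.toSpanSingleton R _ (Submodule.Quotient.mk ⟨a, Ideal.mem_span_singleton_self a⟩)
  have mul_mem (r : R) : r * a ∈ Ideal.span {a} :=
    Ideal.mul_mem_left _ r (Ideal.mem_span_singleton_self a)
  have φ_apply (r : R) : φ r = Submodule.Quotient.mk ⟨r * a, mul_mem r⟩ := rfl
  have ker_φ : J.colon {a} = LinearMap.ker φ := by
    ext r
    rw [Submodule.mem_colon_singleton, LinearMap.mem_ker, φ_apply, Submodule.Quotient.mk_eq_zero]
    exact (and_iff_left (mul_mem r)).symm
  have φ_surjective : Function.Surjective φ := by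
    rintro ⟨⟨x, hx⟩⟩
    obtain ⟨r, rfl⟩ := Ideal.mem_span_singleton'.mp hx
    exact ⟨r, rfl⟩
  Submodule.quotEquivOfEq _ _ ker_φ ≪≫ₗ φ.quotKerEquivOfSurjective φ_surjective

end IdealQuot

section Variables

open CategoryTheory

lemma isSMulRegular_X_quot_span_X_image {σ R : Type*} [CommRing R] {s : Set σ} {j : σ}
    (hj : j ∉ s) : IsSMulRegular (MvPolynomial σ R ⧸
      Ideal.span ((X : σ → MvPolynomial σ R) '' s)) (X j : MvPolynomial σ R) := by
  rw [isSMulRegular_quotient_iff_mem_of_smul_mem]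
  intro p hp
  rw [smul_eq_mul, mem_ideal_span_X_image] at hp
  rw [mem_ideal_span_X_image]
  intro m hm
  obtain ⟨i, hi, hmi⟩ := hp (Finsupp.single j 1 + m) (by simpa [mem_support_iff] using hm)
  have hji : j ≠ i := by rintro rfl; exact hj hi
  exact ⟨i, hi, by simpa [Finsupp.single_apply, hji] using hmi⟩

open scoped Pointwise in
/-- `(R/P)/x(R/P) ≅ R/(P + (x))`, an instance of the third isomorphism theorem. -/
noncomputable def quotSMulTopQuotEquiv {R : Type*} [CommRing R] (P : Ideal R) (x : R) :
    QuotSMulTop x (R ⧸ P) ≃ₗ[R] R ⧸ (P ⊔ Ideal.span {x}) :=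
  have smul_top_eq : x • (⊤ : Submodule R (R ⧸ P)) = Submodule.map P.mkQ (Ideal.span {x}) := by
    rw [← Submodule.range_mkQ, LinearMap.range_eq_map, ← Submodule.map_pointwise_smul,
      ← Submodule.ideal_span_singleton_smul, smul_eq_mul, Ideal.mul_top]
  Submodule.quotEquivOfEq _ _ smul_top_eq ≪≫ₗ
    Submodule.quotientQuotientEquivQuotientSup P (Ideal.span {x})

universe u

variable {σ K : Type u} [CommRing K]

lemma extVanishesBelow_quot_span_X_compl {N : ModuleCat.{u} (MvPolynomial σ K)}
    (T : Finset σ) (hN : ∀ i ∈ T, (X i : MvPolynomial σ K) ∈ Module.annihilator _ N) :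
    ExtVanishesBelow N T.card (ModuleCat.of (MvPolynomial σ K) (MvPolynomial σ K ⧸
      Ideal.span ((X : σ → MvPolynomial σ K) '' (T : Set σ)ᶜ))) := by
  classical
  induction T using Finset.induction_on with
  | empty => exact fun i hi ↦ absurd hi i.not_lt_zero
  | insert j T hj ih =>
    rw [Finset.card_insert_of_notMem hj]
    have hspan : Ideal.span ((X : σ → MvPolynomial σ K) '' (T : Set σ)ᶜ) =
        Ideal.span (X '' (↑(insert j T) : Set σ)ᶜ) ⊔ Ideal.span {X j} := by
      have hcompl : (T : Set σ)ᶜ = (↑(insert j T) : Set σ)ᶜ ∪ {j} := by grind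
      rw [hcompl, Set.image_union, Set.image_singleton, Ideal.span_union]
    refine .of_quotSMulTop (hN j (Finset.mem_insert_self j T))
      (isSMulRegular_X_quot_span_X_image (by simp)) ?_
    refine (ih fun i hi ↦ hN i (Finset.mem_insert_of_mem hi)).of_iso ?_
    exact ((Submodule.quotEquivOfEq _ _ hspan) ≪≫ₗ (quotSMulTopQuotEquiv _ _).symm).toModuleIso

end Variables

section SquareFree

open CategoryTheory

variable {K : Type} [Field K] {n : ℕ} {T : Finset (Fin n)}

/-- The exponent vector of the square-free monomial `sqMon K T`. -/
noncomputable def sqExponent (T : Finset (Fin n)) : Fin n →₀ ℕ :=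
  ∑ i ∈ T, Finsupp.single i 1

lemma sqExponent_apply (T : Finset (Fin n)) (i : Fin n) :
    sqExponent T i = if i ∈ T then 1 else 0 := by
  simp [sqExponent, Finsupp.finsetSum_apply, Finsupp.single_apply]

lemma support_sqExponent (T : Finset (Fin n)) : (sqExponent T).support = T := by
  ext i
  simp [sqExponent_apply]

lemma sqExponent_le_iff {m : Fin n →₀ ℕ} : sqExponent T ≤ m ↔ T ⊆ m.support := by
  refine ⟨fun h ↦ support_sqExponent T ▸ Finsupp.support_mono h, fun h i ↦ ?_⟩
  rw [sqExponent_apply]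
  split_ifs with hi
  · exact Nat.one_le_iff_ne_zero.mpr (Finsupp.mem_support_iff.mp (h hi))
  · exact Nat.zero_le _

variable (K) in
lemma sqMon_eq_monomial (T : Finset (Fin n)) : sqMon K T = monomial (sqExponent T) 1 :=
  (monomial_sum_one T fun i ↦ Finsupp.single i 1).symm

lemma mem_span_sqMon_image_iff {G : Set (Finset (Fin n))} {p : MvPolynomial (Fin n) K} :
    p ∈ Ideal.span (sqMon K '' G) ↔ ∀ m ∈ p.support, ∃ T ∈ G, T ⊆ m.support := by
  have image_eq : sqMon K '' G = (monomial · 1) '' (sqExponent '' G) := by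
    simp only [Set.image_image, sqMon_eq_monomial]
  simp only [image_eq, mem_ideal_span_monomial_image, Set.exists_mem_image, sqExponent_le_iff]

lemma sqMon_mem_span_sqMon_image_iff {G : Set (Finset (Fin n))} :
    sqMon K T ∈ Ideal.span (sqMon K '' G) ↔ ∃ S ∈ G, S ⊆ T := by
  classical
  rw [mem_span_sqMon_image_iff, sqMon_eq_monomial, support_monomial, if_neg one_ne_zero]
  simp only [Finset.mem_singleton, forall_eq, support_sqExponent]

namespace GenBySqMonOfDeg

variable {P Q : ℕ → Prop} {d : ℕ} {I J J' : Ideal (MvPolynomial (Fin n) K)}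

lemma mono (hI : GenBySqMonOfDeg K P I) (hPQ : ∀ k, P k → Q k) : GenBySqMonOfDeg K Q I :=
  let ⟨G, hG, h⟩ := hI
  ⟨G, fun T hT ↦ hPQ _ (hG T hT), h⟩

lemma sup (hI : GenBySqMonOfDeg K P I) (hJ : GenBySqMonOfDeg K Q J) :
    GenBySqMonOfDeg K (fun k ↦ P k ∨ Q k) (I ⊔ J) := by
  obtain ⟨G, hG, rfl⟩ := hI
  obtain ⟨H, hH, rfl⟩ := hJ
  exact ⟨G ∪ H, fun T hT ↦ hT.imp (hG T) (hH T), by rw [Set.image_union, Ideal.span_union]⟩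

lemma span_range {ι : Type*} (f : ι → Finset (Fin n)) (hf : ∀ i, P (f i).card) :
    GenBySqMonOfDeg K P (Ideal.span (Set.range fun i ↦ sqMon K (f i))) :=
  ⟨Set.range f, Set.forall_mem_range.mpr hf, by rw [← Set.range_comp]; rfl⟩

lemma span_singleton (T : Finset (Fin n)) :
    GenBySqMonOfDeg K (fun k ↦ k = T.card) (Ideal.span {sqMon K T}) :=
  ⟨{T}, fun _ hS ↦ congrArg Finset.card hS, by rw [Set.image_singleton]⟩

lemma le_card (hI : GenBySqMonOfDeg K (d ≤ ·) I) (hT : sqMon K T ∈ I) : d ≤ T.card := by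
  obtain ⟨G, hG, rfl⟩ := hI
  obtain ⟨S, hS, hST⟩ := sqMon_mem_span_sqMon_image_iff.mp hT
  exact (hG S hS).trans (Finset.card_le_card hST)

lemma exists_sqMon_notMem (hI : GenBySqMonOfDeg K P I) (hIJ : ¬ I ≤ J) :
    ∃ T, sqMon K T ∈ I ∧ sqMon K T ∉ J := by
  contrapose! hIJ
  obtain ⟨G, -, rfl⟩ := hI
  rw [Ideal.span_le, Set.image_subset_iff]
  exact fun T hT ↦ hIJ T (Ideal.subset_span ⟨T, hT, rfl⟩)

lemma exists_maximal_sqMon_notMem (hI : GenBySqMonOfDeg K P I) (hIJ : ¬ I ≤ J) :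
    ∃ T, sqMon K T ∈ I ∧ sqMon K T ∉ J ∧ ∀ i ∉ T, sqMon K (insert i T) ∈ J := by
  obtain ⟨T, ⟨hTI, hTJ⟩, hTmax⟩ :=
    (Set.toFinite {T | sqMon K T ∈ I ∧ sqMon K T ∉ J}).exists_maximal
      (hI.exists_sqMon_notMem hIJ)
  refine ⟨T, hTI, hTJ, fun i hi ↦ ?_⟩
  by_contra hiJ
  have hiI : sqMon K (insert i T) ∈ I := by
    rw [sqMon, Finset.prod_insert hi]
    exact I.mul_mem_left _ hTI
  exact hi (hTmax ⟨hiI, hiJ⟩ (Finset.subset_insert i T) (Finset.mem_insert_self i T))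

lemma sqMon_union_mem (hJ : GenBySqMonOfDeg K P J) {p : MvPolynomial (Fin n) K}
    (hp : p * sqMon K T ∈ J) {m : Fin n →₀ ℕ} (hm : m ∈ p.support) :
    sqMon K (m.support ∪ T) ∈ J := by
  obtain ⟨G, -, rfl⟩ := hJ
  have hmT : m + sqExponent T ∈ (p * sqMon K T).support := by
    rwa [sqMon_eq_monomial, mem_support_iff, coeff_mul_monomial, mul_one, ← mem_support_iff]
  obtain ⟨S, hS, hSm⟩ := mem_span_sqMon_image_iff.mp hp _ hmT
  refine sqMon_mem_span_sqMon_image_iff.mpr ⟨S, hS, hSm.trans ?_⟩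
  simpa only [support_sqExponent] using Finsupp.support_add (g₁ := m) (g₂ := sqExponent T)

lemma colon_sqMon_eq_span_X (hJ : GenBySqMonOfDeg K P J) (hT : sqMon K T ∉ J)
    (hTJ : ∀ i ∉ T, sqMon K (insert i T) ∈ J) :
    J.colon {sqMon K T} = Ideal.span (X '' (T : Set (Fin n))ᶜ) := by
  apply le_antisymm
  · intro p hp
    rw [Submodule.mem_colon_singleton, smul_eq_mul] at hp
    refine mem_ideal_span_X_image.mpr fun m hm ↦ ?_
    by_contra! hm_compl
    have hmT : m.support ⊆ T := fun i hi ↦ by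
      by_contra hiT
      exact Finsupp.mem_support_iff.mp hi (hm_compl i hiT)
    exact hT (Finset.union_eq_right.mpr hmT ▸ hJ.sqMon_union_mem hp hm)
  · rw [Ideal.span_le, Set.image_subset_iff]
    intro i hi
    have hiT : X i * sqMon K T ∈ J := by
      simpa only [sqMon, Finset.prod_insert hi] using hTJ i hi
    exact Submodule.mem_colon_singleton.mpr hiT

lemma maxGraded_smul_top_lt_top (hI : GenBySqMonOfDeg K P I) (hJ : GenBySqMonOfDeg K Q J)
    (hIJ : ¬ I ≤ J) (hJ'J : J' ≤ J) :
    maxGraded K n • (⊤ : Submodule (MvPolynomial (Fin n) K) (idealQuot I J')) < ⊤ := by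
  refine lt_top_iff_ne_top.mpr fun htop ↦ ?_
  -- By Nakayama's lemma some `r` with constant term `1` satisfies `r I ⊆ J'`.
  obtain ⟨r, hr, hrI⟩ := Submodule.exists_sub_one_mem_and_smul_eq_zero_of_fg_of_le_smul
    (maxGraded K n) (⊤ : Submodule _ (idealQuot I J')) Module.Finite.fg_top htop.ge
  obtain ⟨T, hTI, hTJ⟩ := hI.exists_sqMon_notMem hIJ
  have hrT : r • (⟨sqMon K T, hTI⟩ : I) ∈ Submodule.comap I.subtype J' :=
    (Submodule.Quotient.mk_eq_zero _).mp (hrI (Submodule.Quotient.mk _) Submodule.mem_top)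
  have constantCoeff_r : constantCoeff r = 1 := by
    have maxGraded_le_ker : maxGraded K n ≤ RingHom.ker constantCoeff := by
      simp [maxGraded, Ideal.span_le, Set.range_subset_iff]
    simpa [sub_eq_zero] using maxGraded_le_ker hr
  have zero_mem_support : 0 ∈ r.support := by simp [← constantCoeff_eq, constantCoeff_r]
  exact hTJ (by simpa using hJ.sqMon_union_mem (hJ'J hrT) zero_mem_support)

theorem extVanishesBelow_idealQuot {N : ModuleCat.{0} (MvPolynomial (Fin n) K)}
    (hN : ∀ i, (X i : MvPolynomial (Fin n) K) ∈ Module.annihilator _ N)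
    (hI : GenBySqMonOfDeg K (d ≤ ·) I) (hJ : GenBySqMonOfDeg K P J) :
    ExtVanishesBelow N d (ModuleCat.of _ (idealQuot I J)) := by
  induction J using WellFoundedGT.induction generalizing P with
  | ind J ih =>
  by_cases hIJ : I ≤ J
  · have : Subsingleton (idealQuot I J) :=
      Submodule.Quotient.subsingleton_iff.mpr (Submodule.comap_subtype_eq_top.mpr hIJ)
    exact .of_isZero (ModuleCat.isZero_of_subsingleton _)
  obtain ⟨T, hTI, hTJ, hTinsert⟩ := hI.exists_maximal_sqMon_notMem hIJ
  have hspan : Ideal.span {sqMon K T} ≤ I := (Ideal.span_singleton_le_iff_mem I).mpr hTI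
  have h₁ : ExtVanishesBelow N d (ModuleCat.of _
      (idealQuot (Ideal.span {sqMon K T}) (J ⊓ Ideal.span {sqMon K T}))) := by
    have hquot := (extVanishesBelow_quot_span_X_compl T fun i _ ↦ hN i).of_le (hI.le_card hTI)
    rw [← hJ.colon_sqMon_eq_span_X hTJ hTinsert] at hquot
    exact hquot.of_iso (quotColonEquiv J _).toModuleIso
  have h₃ : ExtVanishesBelow N d (ModuleCat.of _ (idealQuot I (J ⊔ Ideal.span {sqMon K T}))) :=
    ih _ (left_lt_sup.mpr fun h ↦ hTJ (h (Ideal.mem_span_singleton_self _)))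
      (hJ.sup (span_singleton T))
  exact .X₂_of_shortExact (idealQuotShortComplex_shortExact hspan J) h₁ h₃

end GenBySqMonOfDeg

end SquareFree

theorem stmt_3_general {n : ℕ} {K : Type} [Field K] {d : ℕ} {P Q : ℕ → Prop}
    {I I' J : Ideal (MvPolynomial (Fin n) K)} (hI : GenBySqMonOfDeg K (d ≤ ·) I)
    (hI' : GenBySqMonOfDeg K P I') (hJ : GenBySqMonOfDeg K Q J) (hI'I : I' ≤ I) (hI'J : ¬ I' ≤ J)
    (hdep : moduleDepth (maxGraded K n) (idealQuot I' (J ⊓ I')) = (d : ℕ∞)) :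
    moduleDepth (maxGraded K n) (idealQuot I J) = (d : ℕ∞) := by
  have hX : ∀ i, (X i : MvPolynomial (Fin n) K) ∈
      Module.annihilator _ (MvPolynomial (Fin n) K ⧸ maxGraded K n) := fun i ↦ by
    rw [Ideal.annihilator_quotient]
    exact Ideal.subset_span ⟨i, rfl⟩
  exact moduleDepth_X₂_eq_of_shortExact (idealQuotShortComplex_shortExact hI'I J)
    (hI'.maxGraded_smul_top_lt_top hJ hI'J inf_le_left)
    (hI.maxGraded_smul_top_lt_top hJ (fun h ↦ hI'J (hI'I.trans h)) le_rfl) hdep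
    (hI.extVanishesBelow_idealQuot hX (hJ.sup hI'))

/-- Lemma 1.5. -/
theorem stmt_3 (n : ℕ) (K : Type) [Field K] (d : ℕ) (hd : 0 < d)
    (I J : Ideal (MvPolynomial (Fin n) K)) (hJ0 : J ≠ ⊥) (hJI : J < I)
    (r : ℕ) (hr : 0 < r) (f : Fin r → Finset (Fin n)) (hfinj : Function.Injective f)
    (hfd : ∀ i, (f i).card = d)
    (hIgen : I = Ideal.span (Set.range fun i => sqMon K (f i)))
    (hJgen : GenBySqMonOfDeg K (fun k => k = d + 1) J)
    (e : ℕ) (he : 0 < e) (her : e ≤ r)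
    (I' J' : Ideal (MvPolynomial (Fin n) K))
    (hI' : I' = Ideal.span (Set.range fun i : Fin e => sqMon K (f (Fin.castLE her i))))
    (hJ' : J' = J ⊓ I')
    (hdep : moduleDepth (maxGraded K n) (idealQuot I' J') = (d : ℕ∞)) :
    moduleDepth (maxGraded K n) (idealQuot I J) = (d : ℕ∞) := by
  subst hIgen hI' hJ'
  have hI'J : ¬ Ideal.span (Set.range fun i : Fin e ↦ sqMon K (f (Fin.castLE her i))) ≤ J := by
    intro h
    have hd_lt := (hJgen.mono fun _ ↦ Eq.ge).le_card (h (Ideal.subset_span ⟨⟨0, he⟩, rfl⟩))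
    rw [hfd] at hd_lt
    exact d.lt_irrefl hd_lt
  exact stmt_3_general (.span_range f fun i ↦ (hfd i).ge)
    (.span_range (P := (· = d)) _ fun _ ↦ hfd _) hJgen
    (Ideal.span_mono (Set.range_subset_iff.mpr fun _ ↦ ⟨_, rfl⟩)) hI'J hdep
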